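/- If A_2(8, 4, 4) ≥ 4801, then A_2(13, 4, 4) ≥ 157337054 = 4801·2^{15} + 1 + 17885. -/

import Mathlib

open Module

/-- The subspace distance `d_S(U, W) = dim(U + W) − dim(U ∩ W)`. -/
noncomputable def subspaceDist {F : Type*} [Field F] {n : ℕ}
    (U W : Submodule F (Fin n → F)) : ℕ :=
  finrank F ↥(U ⊔ W) - finrank F ↥(U ⊓ W)

/-- `A_q(n, d, k)`: the maximum size of an `(n, M, d, k)_q` constant dimension code, i.e.
of a set of `k`-dimensional subspaces of `F_q^n` with pairwise subspace distance
at least `d`. -/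
noncomputable def maxCDCSize (F : Type*) [Field F] [Fintype F] (n d k : ℕ) : ℕ :=
  sSup {M | ∃ C : Finset (Submodule F (Fin n → F)), C.card = M ∧
    (∀ U ∈ C, finrank F ↥U = k) ∧
    ∀ U ∈ C, ∀ W ∈ C, U ≠ W → d ≤ subspaceDist U W}

section CDC

variable {F : Type*} [Field F]

theorem subspaceDist_add_two_mul_finrank_inf {n : ℕ} (U W : Submodule F (Fin n → F)) :
    subspaceDist U W + 2 * finrank F ↥(U ⊓ W) = finrank F U + finrank F W := by
  have h := Submodule.finrank_sup_add_finrank_inf_eq U W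
  have h' : finrank F ↥(U ⊓ W) ≤ finrank F ↥(U ⊔ W) :=
    Submodule.finrank_mono (inf_le_left.trans le_sup_left)
  unfold subspaceDist
  omega

variable [Fintype F]

theorem bddAbove_cdc_card (n d k : ℕ) :
    BddAbove {M | ∃ C : Finset (Submodule F (Fin n → F)), C.card = M ∧
      (∀ U ∈ C, finrank F ↥U = k) ∧
      ∀ U ∈ C, ∀ W ∈ C, U ≠ W → d ≤ subspaceDist U W} := by
  classical
  have := Fintype.ofFinite (Submodule F (Fin n → F))
  refine ⟨Fintype.card (Submodule F (Fin n → F)), ?_⟩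
  rintro _ ⟨C, rfl, -⟩
  exact Finset.card_le_univ C

theorem exists_cdc_card_eq_maxCDCSize (n d k : ℕ) :
    ∃ C : Finset (Submodule F (Fin n → F)), C.card = maxCDCSize F n d k ∧
      (∀ U ∈ C, finrank F ↥U = k) ∧
      ∀ U ∈ C, ∀ W ∈ C, U ≠ W → d ≤ subspaceDist U W :=
  Nat.sSup_mem
    (s := {M | ∃ C : Finset (Submodule F (Fin n → F)), C.card = M ∧
      (∀ U ∈ C, finrank F ↥U = k) ∧
      ∀ U ∈ C, ∀ W ∈ C, U ≠ W → d ≤ subspaceDist U W})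
    ⟨0, ∅, by simp⟩ (bddAbove_cdc_card n d k)

/-- A family of `k`-subspaces of an `n`-dimensional space whose pairwise intersections have
dimension at most `k - d` gives a constant dimension code of distance `2 * d`. -/
theorem card_le_maxCDCSize {V ι : Type*} [AddCommGroup V] [Module F V] [FiniteDimensional F V]
    [Fintype ι] {n d k : ℕ} (hV : finrank F V = n) (hd : 0 < d) (f : ι → Submodule F V)
    (hf : ∀ i, finrank F (f i) = k)
    (hinf : ∀ i j, i ≠ j → finrank F ↥(f i ⊓ f j) + d ≤ k) :
    Fintype.card ι ≤ maxCDCSize F n (2 * d) k := by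
  classical
  let e : V ≃ₗ[F] (Fin n → F) := LinearEquiv.ofFinrankEq _ _ (by simp [hV])
  let g : ι → Submodule F (Fin n → F) := fun i => (f i).map (e : V →ₗ[F] (Fin n → F))
  have hginf (i j : ι) : finrank F ↥(g i ⊓ g j) = finrank F ↥(f i ⊓ f j) := by
    rw [← Submodule.map_inf _ e.injective]
    exact LinearEquiv.finrank_map_eq e _
  have hg (i : ι) : finrank F (g i) = k := by
    rw [← hf i]
    exact LinearEquiv.finrank_map_eq e _
  have hinj : Function.Injective g := by
    intro i j hij
    by_contra hne
    have h1 := hinf i j hne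
    have h2 := hginf i j
    rw [hij, inf_idem, hg] at h2
    omega
  refine le_csSup (bddAbove_cdc_card n (2 * d) k) ⟨Finset.univ.image g, ?_, ?_, ?_⟩
  · rw [Finset.card_image_of_injective _ hinj, Finset.card_univ]
  · simpa using hg
  · simp only [Finset.mem_image, Finset.mem_univ, true_and]
    rintro _ ⟨i, rfl⟩ _ ⟨j, rfl⟩ hne
    have h1 := hinf i j (fun h => hne (by rw [h]))
    have h2 := subspaceDist_add_two_mul_finrank_inf (g i) (g j)
    rw [hginf, hg, hg] at h2
    omega

end CDC

section RankMetric

variable (p : ℕ) [Fact p.Prime]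

/-- The map `x ↦ ∑ i, a i * x ^ p ^ i` defined by a linearized polynomial. -/
noncomputable def linearizedMap (K : Type*) [Field K] [Algebra (ZMod p) K] [CharP K p] {k : ℕ}
    (a : Fin k → K) : K →ₗ[ZMod p] K :=
  ∑ i, LinearMap.mulLeft (ZMod p) (a i) ∘ₗ
    (iterateFrobenius K p i).toAddMonoidHom.toZModLinearMap p

variable {p} {K : Type*} [Field K] [Algebra (ZMod p) K] [CharP K p]

theorem linearizedMap_apply {k : ℕ} (a : Fin k → K) (x : K) :
    linearizedMap p K a x = ∑ i, a i * x ^ p ^ (i : ℕ) := by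
  simp [linearizedMap, LinearMap.sum_apply, iterateFrobenius_def]

theorem linearizedMap_sub {k : ℕ} (a b : Fin k → K) :
    linearizedMap p K a - linearizedMap p K b = linearizedMap p K (a - b) := by
  ext x
  simp [linearizedMap_apply, sub_mul]

open Polynomial in
theorem finrank_ker_linearizedMap_le [Finite K] {k : ℕ} {a : Fin (k + 1) → K} (ha : a ≠ 0) :
    finrank (ZMod p) (LinearMap.ker (linearizedMap p K a)) ≤ k := by
  classical
  have hp : 1 < p := (Fact.out : p.Prime).one_lt
  let P : K[X] := ∑ i : Fin (k + 1), C (a i) * X ^ p ^ (i : ℕ)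
  obtain ⟨j, hj⟩ := Function.ne_iff.mp ha
  have hP : P ≠ 0 := by
    intro h
    apply hj
    have hc : P.coeff (p ^ (j : ℕ)) = a j := by
      simp only [P, finsetSum_coeff, coeff_C_mul, coeff_X_pow]
      rw [Finset.sum_eq_single j]
      · simp
      · intro i _ hij
        rw [if_neg, mul_zero]
        intro h
        exact hij (Fin.ext (Nat.pow_right_injective hp h.symm))
      · simp
    rw [← hc, h]
    simp
  have hdeg : P.natDegree ≤ p ^ k := by
    refine natDegree_sum_le_of_forall_le _ _ fun i _ => (natDegree_C_mul_X_pow_le _ _).trans ?_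
    exact Nat.pow_le_pow_right hp.le (Nat.lt_succ_iff.mp i.2)
  have hsub : (LinearMap.ker (linearizedMap p K a) : Set K) ⊆ P.roots.toFinset := by
    intro x hx
    have hx' : linearizedMap p K a x = 0 := hx
    rw [linearizedMap_apply] at hx'
    simp only [Finset.mem_coe, Multiset.mem_toFinset, mem_roots hP, IsRoot.def]
    simpa [P, eval_finsetSum] using hx'
  have hcard : p ^ finrank (ZMod p) (LinearMap.ker (linearizedMap p K a)) ≤ p ^ k := by
    calc p ^ finrank (ZMod p) (LinearMap.ker (linearizedMap p K a))
        = Nat.card (LinearMap.ker (linearizedMap p K a)) := by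
          rw [Module.natCard_eq_pow_finrank (K := ZMod p), Nat.card_zmod]
      _ = (LinearMap.ker (linearizedMap p K a) : Set K).ncard := rfl
      _ ≤ (P.roots.toFinset : Set K).ncard := Set.ncard_le_ncard hsub
      _ ≤ P.natDegree := by
          rw [Set.ncard_coe_finset]
          exact (Multiset.toFinset_card_le _).trans (card_roots' P)
      _ ≤ p ^ k := hdeg
  exact (Nat.pow_le_pow_iff_right hp).mp hcard

/-- Gabidulin codes: linear maps into an `m`-dimensional space, indexed by `k + 1` elements of
the field of order `p ^ m`, whose pairwise differences have kernels of dimension at most `k`. -/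
theorem exists_gabidulin {X Y : Type*} [AddCommGroup X] [Module (ZMod p) X]
    [FiniteDimensional (ZMod p) X] [AddCommGroup Y] [Module (ZMod p) Y]
    [FiniteDimensional (ZMod p) Y] {m : ℕ} (hm : m ≠ 0) (hY : finrank (ZMod p) Y = m)
    (hX : finrank (ZMod p) X ≤ m) (k : ℕ) :
    ∃ f : (Fin (k + 1) → GaloisField p m) → X →ₗ[ZMod p] Y,
      ∀ a b, a ≠ b → finrank (ZMod p) (LinearMap.ker (f a - f b)) ≤ k := by
  have hK := GaloisField.finrank p hm
  obtain ⟨ι, hι⟩ : ∃ ι : X →ₗ[ZMod p] GaloisField p m, Function.Injective ι :=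
    finrank_le_iff_exists_linearMap.mp (hX.trans hK.ge)
  let e : GaloisField p m ≃ₗ[ZMod p] Y := LinearEquiv.ofFinrankEq _ _ (hK.trans hY.symm)
  refine ⟨fun a => e.toLinearMap ∘ₗ linearizedMap p _ a ∘ₗ ι, fun a b hab => ?_⟩
  have hker (x) (hx : x ∈ LinearMap.ker (e.toLinearMap ∘ₗ linearizedMap p _ a ∘ₗ ι -
      e.toLinearMap ∘ₗ linearizedMap p _ b ∘ₗ ι)) :
      ι x ∈ LinearMap.ker (linearizedMap p (GaloisField p m) (a - b)) := by
    rw [← linearizedMap_sub]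
    simpa [sub_eq_zero] using hx
  refine (LinearMap.finrank_le_finrank_of_injective (f := ι.restrict hker) ?_).trans
    (finrank_ker_linearizedMap_le (sub_ne_zero.mpr hab))
  intro x y hxy
  exact Subtype.ext (hι (congrArg Subtype.val hxy))

end RankMetric

open LinearAlgebra.Projectivization in
/-- A line spread: `85` two-dimensional subspaces of `𝔽₂⁸` that pairwise intersect trivially. -/
theorem exists_line_spread {V : Type*} [AddCommGroup V] [Module (ZMod 2) V]
    (hV : finrank (ZMod 2) V = 8) :
    ∃ s : Fin 85 → Submodule (ZMod 2) V,
      (∀ i, finrank (ZMod 2) (s i) = 2) ∧ ∀ i j, i ≠ j → s i ⊓ s j = ⊥ := by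
  have : FiniteDimensional (ZMod 2) V := FiniteDimensional.of_finrank_pos (by omega)
  let K := GaloisField 2 2
  have hK : finrank (ZMod 2) K = 2 := GaloisField.finrank 2 two_ne_zero
  have hcard : Nat.card (ℙ K (Fin 4 → K)) = 85 := by
    rw [Projectivization.card_of_finrank K (Fin 4 → K) (finrank_fin_fun K),
      GaloisField.card 2 2 two_ne_zero]
    decide
  let t : Fin 85 ≃ ℙ K (Fin 4 → K) := (Finite.equivFinOfCardEq hcard).symm
  let e : (Fin 4 → K) ≃ₗ[ZMod 2] V := LinearEquiv.ofFinrankEq _ _ (by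
    rw [hV, finrank_pi_fintype, hK]; simp)
  refine ⟨fun i => ((t i).submodule.restrictScalars (ZMod 2)).map e.toLinearMap,
    fun i => ?_, fun i j hij => ?_⟩
  · rw [LinearEquiv.finrank_map_eq e]
    change finrank (ZMod 2) (t i).submodule = 2
    rw [← finrank_mul_finrank (ZMod 2) K, hK, Projectivization.finrank_submodule]
  · rw [← Submodule.map_inf _ e.injective, Submodule.map_eq_bot_iff]
    have hatom (i : Fin 85) : IsAtom (t i).submodule :=
      Submodule.isAtom_iff_finrank_eq_one.mpr (t i).finrank_submodule
    have hne : (t i).submodule ≠ (t j).submodule := fun h =>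
      hij (t.injective (Projectivization.submodule_injective h))
    have hdisj := ((hatom i).disjoint_of_ne (hatom j) hne).eq_bot
    ext x
    simpa using Submodule.ext_iff.mp hdisj x

section Linkage

variable {F X Y Z : Type*} [Field F] [AddCommGroup X] [Module F X] [AddCommGroup Y]
  [Module F Y] [AddCommGroup Z] [Module F Z]

theorem finrank_range_inf_range_le [FiniteDimensional F X] {X' : Type*}
    [AddCommGroup X'] [Module F X']
    (f : X →ₗ[F] Y) (g : X' →ₗ[F] Y) (S : Submodule F X) (h : ∀ x x', f x = g x' → x ∈ S) :
    finrank F ↥(LinearMap.range f ⊓ LinearMap.range g) ≤ finrank F S := by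
  refine (Submodule.finrank_mono (t := S.map f) ?_).trans (Submodule.finrank_map_le f S)
  rintro _ ⟨⟨x, rfl⟩, x', hx'⟩
  exact ⟨x, h x x' hx'.symm, rfl⟩

theorem finrank_comap_le_of_injective {f : X →ₗ[F] Y} (hf : Function.Injective f)
    (S : Submodule F Y) :
    finrank F (S.comap f) ≤ finrank F ↥(LinearMap.range f ⊓ S) := by
  rw [← Submodule.map_comap_eq]
  exact ((S.comap f).equivMapOfInjective f hf).finrank_eq.le

theorem finrank_ker_comp_le [FiniteDimensional F X] [FiniteDimensional F Y]
    (f : Y →ₗ[F] Z) (g : X →ₗ[F] Y) :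
    finrank F (LinearMap.ker (f ∘ₗ g)) ≤
      finrank F (LinearMap.ker g) + finrank F (LinearMap.ker f) := by
  have h := (g.domRestrict (LinearMap.ker (f ∘ₗ g))).finrank_range_add_finrank_ker
  have h1 : finrank F (LinearMap.range (g.domRestrict (LinearMap.ker (f ∘ₗ g)))) ≤
      finrank F (LinearMap.ker f) := by
    refine Submodule.finrank_mono ?_
    rintro _ ⟨x, rfl⟩
    exact x.2
  have h2 : finrank F (LinearMap.ker (g.domRestrict (LinearMap.ker (f ∘ₗ g)))) ≤
      finrank F (LinearMap.ker g) := by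
    refine LinearMap.finrank_le_finrank_of_injective
      (f := (Submodule.subtype _).restrict (q := LinearMap.ker g) fun x hx => hx) ?_
    intro x y hxy
    have h' := congrArg Subtype.val hxy
    exact Subtype.ext (Subtype.ext h')
  omega

end Linkage

/-- The linkage of an `(8, M, 4, 4)₂` code with a `4 × 5` rank metric code of distance `2`,
enlarged by `85 * 2 ^ 8` codewords meeting the special `5`-dimensional space in dimension `2`
and projecting to the lines of a spread of `𝔽₂⁸`. -/
theorem linkage_add_le_maxCDCSize (C : Finset (Submodule (ZMod 2) (Fin 8 → ZMod 2)))
    (hC : ∀ U ∈ C, finrank (ZMod 2) U = 4)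
    (hinf : ∀ U ∈ C, ∀ W ∈ C, U ≠ W → finrank (ZMod 2) ↥(U ⊓ W) ≤ 2) :
    C.card * 2 ^ 15 + 85 * 2 ^ 8 ≤ maxCDCSize (ZMod 2) 13 4 4 := by
  classical
  let L := Fin 2 → ZMod 2
  let V := Fin 8 → ZMod 2
  let W := L × (Fin 3 → ZMod 2)
  have hLL : finrank (ZMod 2) (L × L) = 4 := by simp [L]
  obtain ⟨f, hf⟩ := exists_gabidulin (p := 2) (X := L × L) (Y := W) (m := 5) (by norm_num)
    (by simp [W, L]) (by rw [hLL]; norm_num) 2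
  obtain ⟨g, hg⟩ := exists_gabidulin (p := 2) (X := L × L) (Y := L × L) (m := 4) (by norm_num)
    hLL hLL.le 1
  obtain ⟨s, hs, hs'⟩ := exists_line_spread (V := V) (by simp [V])
  obtain ⟨π, hπ⟩ : ∃ π : L × L →ₗ[ZMod 2] (Fin 3 → ZMod 2),
      finrank (ZMod 2) (LinearMap.ker π) = 1 := by
    let e : (L × L) ≃ₗ[ZMod 2] ((Fin 3 → ZMod 2) × ZMod 2) :=
      LinearEquiv.ofFinrankEq _ _ (by simp [L])
    refine ⟨LinearMap.fst (ZMod 2) (Fin 3 → ZMod 2) (ZMod 2) ∘ₗ e.toLinearMap, ?_⟩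
    have h := LinearMap.finrank_range_add_finrank_ker
      (LinearMap.fst (ZMod 2) (Fin 3 → ZMod 2) (ZMod 2) ∘ₗ e.toLinearMap)
    rw [LinearEquiv.range_comp, Submodule.range_fst, finrank_top, finrank_fin_fun, hLL] at h
    omega
  let eC (U : C) : (L × L) ≃ₗ[ZMod 2] U.1 :=
    LinearEquiv.ofFinrankEq _ _ (hLL.trans (hC U.1 U.2).symm)
  let eS (i : Fin 85) : L ≃ₗ[ZMod 2] s i := LinearEquiv.ofFinrankEq _ _ (by rw [hs]; simp [L])
  let A (c : C × (Fin 3 → GaloisField 2 5)) : L × L →ₗ[ZMod 2] V × W :=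
    (c.1.1.subtype ∘ₗ (eC c.1).toLinearMap).prod (f c.2)
  let B (c : Fin 85 × (Fin 2 → GaloisField 2 4)) : L × L →ₗ[ZMod 2] V × W :=
    ((s c.1).subtype ∘ₗ (eS c.1).toLinearMap ∘ₗ LinearMap.fst (ZMod 2) L L).prod
      ((LinearMap.snd (ZMod 2) L L).prod (π ∘ₗ g c.2))
  have hAinj (c) : Function.Injective (A c) := fun x y hxy =>
    (eC c.1).injective (Subtype.ext (congrArg Prod.fst hxy))
  have hBinj (c) : Function.Injective (B c) := fun x y hxy =>
    Prod.ext ((eS c.1).injective (Subtype.ext (congrArg Prod.fst hxy)))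
      (congrArg (fun z => z.2.1) hxy)
  have hcomap (U : C) (S : Submodule (ZMod 2) V) : finrank (ZMod 2)
      (S.comap (U.1.subtype ∘ₗ (eC U).toLinearMap)) ≤ finrank (ZMod 2) ↥(U.1 ⊓ S) := by
    refine (finrank_comap_le_of_injective
      (f := U.1.subtype ∘ₗ (eC U).toLinearMap)
      (U.1.injective_subtype.comp (eC U).injective) S).trans ?_
    rw [LinearEquiv.range_comp, Submodule.range_subtype]
  have hAA (c d) (hcd : c ≠ d) :
      finrank (ZMod 2) ↥(LinearMap.range (A c) ⊓ LinearMap.range (A d)) ≤ 2 := by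
    obtain ⟨U, a⟩ := c
    obtain ⟨U', b⟩ := d
    by_cases hU : U = U'
    · subst hU
      refine (finrank_range_inf_range_le _ _ (LinearMap.ker (f a - f b)) fun x y hxy => ?_).trans
        (hf a b fun h => hcd (by rw [h]))
      obtain rfl : x = y := (eC U).injective (Subtype.ext (congrArg Prod.fst hxy))
      exact sub_eq_zero.mpr (congrArg Prod.snd hxy)
    · refine (finrank_range_inf_range_le _ _
        (U'.1.comap (U.1.subtype ∘ₗ (eC U).toLinearMap)) fun x y hxy => ?_).trans
        ((hcomap U U'.1).trans (hinf _ U.2 _ U'.2 fun h => hU (Subtype.ext h)))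
      have h1 : (eC U x : V) = eC U' y := congrArg Prod.fst hxy
      change (eC U x : V) ∈ U'.1
      exact h1 ▸ (eC U' y).2
  have hAB (c d) : finrank (ZMod 2) ↥(LinearMap.range (A c) ⊓ LinearMap.range (B d)) ≤ 2 := by
    refine (finrank_range_inf_range_le _ _
      ((s d.1).comap (c.1.1.subtype ∘ₗ (eC c.1).toLinearMap)) fun x y hxy => ?_).trans
      ((hcomap c.1 _).trans ((Submodule.finrank_mono inf_le_right).trans (hs d.1).le))
    have h1 : (eC c.1 x : V) = eS d.1 y.1 := congrArg Prod.fst hxy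
    change (eC c.1 x : V) ∈ s d.1
    exact h1 ▸ (eS d.1 y.1).2
  have hBB (c d) (hcd : c ≠ d) :
      finrank (ZMod 2) ↥(LinearMap.range (B c) ⊓ LinearMap.range (B d)) ≤ 2 := by
    obtain ⟨i, a⟩ := c
    obtain ⟨j, b⟩ := d
    by_cases hij : i = j
    · subst hij
      have h1 := hg a b fun h => hcd (by rw [h])
      have h2 := finrank_ker_comp_le π (g a - g b)
      refine (finrank_range_inf_range_le _ _ (LinearMap.ker (π ∘ₗ (g a - g b)))
        fun x y hxy => ?_).trans (by omega)
      obtain rfl : x = y := Prod.ext ((eS i).injective (Subtype.ext (congrArg Prod.fst hxy)))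
        (congrArg (fun z => z.2.1) hxy)
      have h3 : π (g a x) = π (g b x) := congrArg (fun z => z.2.2) hxy
      simp [h3]
    · refine (finrank_range_inf_range_le _ _ (LinearMap.ker (LinearMap.fst (ZMod 2) L L))
        fun x y hxy => ?_).trans ?_
      · have h1 : (eS i x.1 : V) = eS j y.1 := congrArg Prod.fst hxy
        have h2 : (eS i x.1 : V) ∈ s i ⊓ s j := ⟨(eS i x.1).2, h1 ▸ (eS j y.1).2⟩
        rw [hs' i j hij, Submodule.mem_bot] at h2
        exact (eS i).map_eq_zero_iff.mp (Subtype.ext h2)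
      · have h := (LinearMap.fst (ZMod 2) L L).finrank_range_add_finrank_ker
        rw [hLL, Submodule.range_fst, finrank_top, finrank_fin_fun] at h
        omega
  have : Fintype (GaloisField 2 5) := Fintype.ofFinite _
  have : Fintype (GaloisField 2 4) := Fintype.ofFinite _
  have h5 : Fintype.card (GaloisField 2 5) = 2 ^ 5 := by
    rw [← Nat.card_eq_fintype_card, GaloisField.card 2 5 (by norm_num)]
  have h4 : Fintype.card (GaloisField 2 4) = 2 ^ 4 := by
    rw [← Nat.card_eq_fintype_card, GaloisField.card 2 4 (by norm_num)]
  have key := card_le_maxCDCSize (F := ZMod 2) (V := V × W) (n := 13) (d := 2) (k := 4)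
    (by simp [V, W, L]) two_pos
    (Sum.elim (fun c => LinearMap.range (A c)) fun c => LinearMap.range (B c))
    (by
      rintro (c | c)
      · exact (LinearMap.finrank_range_of_inj (hAinj c)).trans hLL
      · exact (LinearMap.finrank_range_of_inj (hBinj c)).trans hLL)
    (by
      rintro (c | c) (d | d) hcd
      · exact Nat.add_le_add_right (hAA c d fun h => hcd (by rw [h])) 2
      · exact Nat.add_le_add_right (hAB c d) 2
      · rw [inf_comm]
        exact Nat.add_le_add_right (hAB d c) 2
      · exact Nat.add_le_add_right (hBB c d fun h => hcd (by rw [h])) 2)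
  simpa [h5, h4] using key

/-- If `A_2(8, 4, 4) ≥ 4801`, then `A_2(13, 4, 4) ≥ 157337054 = 4801·2^{15} + 1 + 17885`. -/
theorem A2_13_4_4_lower_bound (h : 4801 ≤ maxCDCSize (ZMod 2) 8 4 4) :
    157337054 ≤ maxCDCSize (ZMod 2) 13 4 4 ∧
    (157337054 : ℕ) = 4801 * 2 ^ 15 + 1 + 17885 := by
  refine ⟨?_, by norm_num⟩
  obtain ⟨C, hcard, hdim, hdist⟩ := exists_cdc_card_eq_maxCDCSize (F := ZMod 2) 8 4 4
  have hlink := linkage_add_le_maxCDCSize C hdim fun U hU W hW hne => by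
    have h1 := subspaceDist_add_two_mul_finrank_inf U W
    have h2 := hdist U hU W hW hne
    rw [hdim U hU, hdim W hW] at h1
    omega
  omega
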